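/- arXiv:math/0209383 — 2 statements merged into one kernel-verified Lean document; each statement's English description precedes it below -/
import Mathlib

section
/- Fix n ∈ ℕ, j ∈ ℕ and c > 0. Let T ⊆ ℝⁿ be a compact subset and let S ⊆ (0,∞) × ℝⁿ be a closed subset (of (0,∞) × ℝⁿ) such that for every t > 0 one has dist(T, S_t) ≥ c·t, where S_t = { y ∈ ℝⁿ : (t,y) ∈ S }. Then there exists a C^∞ function ψ : (0,∞) × ℝⁿ → [0,1] such that ψ ≡ 1 on (0,∞) × T, ψ ≡ 0 on S, and the function Ψ : ℝ × ℝⁿ → ℝ defined by Ψ(t,y) = t^{j+1} ψ(t,y) for t > 0 and Ψ(t,y) = 0 for t ≤ 0 is j-times continuously differentiable on all of ℝ × ℝⁿ. -/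
open MeasureTheory Set Metric
open scoped ContDiff Topology

set_option linter.unusedSectionVars false
noncomputable section Aux
variable {E : Type} [NormedAddCommGroup E] [NormedSpace ℝ E] [FiniteDimensional ℝ E]
  [MeasurableSpace E] [BorelSpace E] (μ : Measure E) [μ.IsAddHaarMeasure]

/-- integrand -/
def cutK {F : Type} [NormedAddCommGroup F] [NormedSpace ℝ F] (d : E → ℝ) (m : ℤ)
    (A : E × ℝ → F) (p : ℝ × E) (x : E) : F :=
  p.1 ^ m • A (p.1⁻¹ • (p.2 - x, d x))

/-- integrated -/
def cutG {F : Type} [NormedAddCommGroup F] [NormedSpace ℝ F] (d : E → ℝ) (m : ℤ)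
    (A : E × ℝ → F) (p : ℝ × E) : F :=
  if 0 < p.1 then ∫ x, cutK d m A p x ∂μ else 0

/-- transport direction -/
def cutL (w : E × ℝ) : (ℝ × E) →L[ℝ] (E × ℝ) :=
  (ContinuousLinearMap.inl ℝ E ℝ).comp (ContinuousLinearMap.snd ℝ ℝ E)
    - (ContinuousLinearMap.fst ℝ ℝ E).smulRight w

/-- derived symbol -/
def cutB {F : Type} [NormedAddCommGroup F] [NormedSpace ℝ F] (m : ℤ)
    (A : E × ℝ → F) (w : E × ℝ) : (ℝ × E) →L[ℝ] F :=
  (m : ℝ) • (ContinuousLinearMap.fst ℝ ℝ E).smulRight (A w) + (fderiv ℝ A w).comp (cutL w)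

lemma cutL_contDiff : ContDiff ℝ ∞ (cutL (E := E)) := by
  unfold cutL
  have : ContDiff ℝ ∞ (fun w : E × ℝ => (ContinuousLinearMap.fst ℝ ℝ E).smulRight w) :=
    (ContinuousLinearMap.smulRightL ℝ (ℝ × E) (E × ℝ) (ContinuousLinearMap.fst ℝ ℝ E)).contDiff
  exact contDiff_const.sub this

lemma cutB_contDiff {F : Type} [NormedAddCommGroup F] [NormedSpace ℝ F] (m : ℤ)
    {A : E × ℝ → F} (hA : ContDiff ℝ ∞ A) : ContDiff ℝ ∞ (cutB m A) := by
  unfold cutB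
  have h1 : ContDiff ℝ ∞ (fun w : E × ℝ => (ContinuousLinearMap.fst ℝ ℝ E).smulRight (A w)) :=
    (ContinuousLinearMap.smulRightL ℝ (ℝ × E) F (ContinuousLinearMap.fst ℝ ℝ E)).contDiff.comp hA
  have h2 : ContDiff ℝ ∞ (fderiv ℝ A) := hA.fderiv_right (by simp)
  exact (h1.const_smul (m : ℝ)).add (h2.clm_comp cutL_contDiff)

lemma cutB_supp {F : Type} [NormedAddCommGroup F] [NormedSpace ℝ F] (m : ℤ)
    {A : E × ℝ → F} (hA : HasCompactSupport A) : HasCompactSupport (cutB m A) := by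
  refine HasCompactSupport.mono' (f := A) hA ?_
  intro w hw
  by_contra h
  apply hw
  have h1 : A w = 0 := image_eq_zero_of_notMem_tsupport h
  have h2 : fderiv ℝ A w = 0 := by
    by_contra h3
    exact h (support_fderiv_subset ℝ h3)
  ext <;> simp [cutB, h1, h2]

lemma cutK_hasFDerivAt {F : Type} [NormedAddCommGroup F] [NormedSpace ℝ F] (d : E → ℝ) (m : ℤ)
    {A : E × ℝ → F} (hA : ContDiff ℝ ∞ A) (p : ℝ × E) (hp : 0 < p.1) (x : E) :
    HasFDerivAt (fun p => cutK d m A p x) (cutK d (m - 1) (cutB m A) p x) p := by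
  have hf : HasFDerivAt (fun p : ℝ × E => p.1) (ContinuousLinearMap.fst ℝ ℝ E) p := hasFDerivAt_fst
  have hs : HasFDerivAt (fun p : ℝ × E => p.2) (ContinuousLinearMap.snd ℝ ℝ E) p := hasFDerivAt_snd
  have h1 : HasFDerivAt (fun p : ℝ × E => p.1 ^ m)
      (((m : ℝ) * p.1 ^ (m - 1)) • ContinuousLinearMap.fst ℝ ℝ E) p :=
    (hasDerivAt_zpow m p.1 (Or.inl hp.ne')).comp_hasFDerivAt p hf
  have h2 : HasFDerivAt (fun p : ℝ × E => p.1⁻¹)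
      ((-(p.1 ^ 2)⁻¹) • ContinuousLinearMap.fst ℝ ℝ E) p :=
    (hasDerivAt_inv hp.ne').comp_hasFDerivAt p hf
  have h3 : HasFDerivAt (fun p : ℝ × E => (p.2 - x, d x))
      ((ContinuousLinearMap.snd ℝ ℝ E).prod 0) p :=
    (hs.sub_const x).prodMk (hasFDerivAt_const _ _)
  have h4 := (hA.differentiable (by simp) (p.1⁻¹ • (p.2 - x, d x))).hasFDerivAt.comp p (h2.smul h3)
  have h5 := h1.smul h4
  refine h5.congr_fderiv ?_
  have e1 : p.1 ^ m = p.1 ^ (m - 1) * p.1 := by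
    rw [← zpow_add_one₀ hp.ne']; congr 1; ring
  refine ContinuousLinearMap.ext fun v => ?_
  have e2 : (p.1⁻¹ • (v.2, (0 : ℝ)) + (-(p.1 ^ 2)⁻¹ * v.1) • (p.2 - x, d x) : E × ℝ)
      = p.1⁻¹ • ((v.2, (0 : ℝ)) - v.1 • (p.1⁻¹ • (p.2 - x, d x))) := by
    generalize (p.2 - x, d x) = u
    generalize (v.2, (0 : ℝ)) = u'
    match_scalars <;> field_simp
  have e3 : fderiv ℝ A (p.1⁻¹ • (p.2 - x, d x))
      (p.1⁻¹ • (v.2, (0 : ℝ)) + (-(p.1 ^ 2)⁻¹ * v.1) • (p.2 - x, d x))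
      = p.1⁻¹ • fderiv ℝ A (p.1⁻¹ • (p.2 - x, d x))
        ((v.2, (0 : ℝ)) - v.1 • (p.1⁻¹ • (p.2 - x, d x))) := by
    rw [e2, map_smul]
  have lhs : (p.1 ^ m • fderiv ℝ A (p.1⁻¹ • (p.2 - x, d x))
      (p.1⁻¹ • (v.2, (0 : ℝ)) + (-(p.1 ^ 2)⁻¹ * v.1) • (p.2 - x, d x))
      + ((m : ℝ) * p.1 ^ (m - 1) * v.1) • A (p.1⁻¹ • (p.2 - x, d x)))
      = p.1 ^ (m - 1) • ((m : ℝ) • v.1 • A (p.1⁻¹ • (p.2 - x, d x)) +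
        fderiv ℝ A (p.1⁻¹ • (p.2 - x, d x))
        ((v.2, (0 : ℝ)) - v.1 • (p.1⁻¹ • (p.2 - x, d x)))) := by
    rw [e3, e1]
    generalize fderiv ℝ A (p.1⁻¹ • (p.2 - x, d x))
        ((v.2, (0 : ℝ)) - v.1 • (p.1⁻¹ • (p.2 - x, d x))) = u
    generalize A (p.1⁻¹ • (p.2 - x, d x)) = u'
    generalize p.1 ^ (m - 1) = a
    match_scalars <;> field_simp
  exact lhs

lemma cutK_bound {F : Type} [NormedAddCommGroup F] [NormedSpace ℝ F]
    {A : E × ℝ → F} (hA : ContDiff ℝ ∞ A) (hA' : HasCompactSupport A) :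
    ∃ M R : ℝ, 0 ≤ M ∧ 0 ≤ R ∧ (∀ w, ‖A w‖ ≤ M) ∧ ∀ (d : E → ℝ) (m : ℤ) (p : ℝ × E), 0 < p.1 →
      ∀ x ∉ closedBall p.2 (p.1 * R), cutK d m A p x = 0 := by
  obtain ⟨M, hM⟩ := hA.continuous.bounded_above_of_compact_support hA'
  obtain ⟨R, hR⟩ := hA'.isCompact.isBounded.subset_closedBall 0
  refine ⟨M, max R 0, (norm_nonneg _).trans (hM 0), le_max_right _ _, hM, ?_⟩
  intro d m p hp x hx
  have : A (p.1⁻¹ • (p.2 - x, d x)) = 0 := by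
    by_contra h
    apply hx
    have h1 := hR (subset_tsupport _ h)
    rw [mem_closedBall_zero_iff] at h1
    have h2 := (norm_fst_le _).trans h1
    simp only [Prod.smul_fst, norm_smul, norm_inv, Real.norm_eq_abs, abs_of_pos hp] at h2
    rw [inv_mul_le_iff₀ hp] at h2
    rw [mem_closedBall, dist_eq_norm, norm_sub_rev]
    exact h2.trans (mul_le_mul_of_nonneg_left (le_max_left _ _) hp.le)
  rw [cutK, this, smul_zero]

lemma cutK_cont {F : Type} [NormedAddCommGroup F] [NormedSpace ℝ F]
    {A : E × ℝ → F} (hA : ContDiff ℝ ∞ A) {d : E → ℝ} (hd : Continuous d) (m : ℤ) (p : ℝ × E) :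
    Continuous (cutK d m A p) := by
  unfold cutK
  have := hA.continuous
  fun_prop

lemma cutG_hasFDerivAt {F : Type} [NormedAddCommGroup F] [NormedSpace ℝ F]
    {A : E × ℝ → F} (hA : ContDiff ℝ ∞ A) (hA' : HasCompactSupport A)
    {d : E → ℝ} (hd : Continuous d) (m : ℤ) (p : ℝ × E) (hp : 0 < p.1) :
    HasFDerivAt (cutG μ d m A) (cutG μ d (m - 1) (cutB m A) p) p := by
  obtain ⟨M, R, hM0, hR0, hM, hR⟩ := cutK_bound (cutB_contDiff m hA) (cutB_supp m hA')
  obtain ⟨M', R', -, -, -, hR'⟩ := cutK_bound hA hA'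
  obtain ⟨Z, hZ⟩ : ∃ Z, ∀ t ∈ Icc (p.1 / 2) (2 * p.1), ‖t ^ (m - 1)‖ ≤ Z := by
    apply isCompact_Icc.exists_bound_of_continuousOn
    intro t ht
    exact (continuousAt_zpow₀ t _ (Or.inl (by have := ht.1; intro h; linarith))).continuousWithinAt
  have key : ∀ q ∈ ball p (p.1 / 2), q.1 ∈ Icc (p.1 / 2) (2 * p.1) ∧ dist q.2 p.2 ≤ p.1 := by
    intro q hq
    rw [mem_ball, Prod.dist_eq, max_lt_iff, Real.dist_eq, abs_lt] at hq
    refine ⟨⟨?_, ?_⟩, ?_⟩ <;> linarith [hq.1.1, hq.1.2, hq.2]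
  have h := hasFDerivAt_integral_of_dominated_of_fderiv_le (𝕜 := ℝ) (μ := μ)
    (F := cutK d m A) (F' := cutK d (m - 1) (cutB m A)) (x₀ := p)
    (bound := (closedBall p.2 (p.1 + 2 * p.1 * R)).indicator (fun _ => Z * M))
    (s := ball p (p.1 / 2)) (ball_mem_nhds _ (by linarith))
    (Filter.Eventually.of_forall fun q => (cutK_cont hA hd m q).aestronglyMeasurable)
    ((cutK_cont hA hd m p).integrable_of_hasCompactSupport
      (HasCompactSupport.intro (isCompact_closedBall _ _) (hR' d m p hp)))
    ((cutK_cont (cutB_contDiff m hA) hd (m - 1) p).aestronglyMeasurable)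
    (Filter.Eventually.of_forall fun x q hq => by
      obtain ⟨h1, h2⟩ := key q hq
      have hq0 : 0 < q.1 := by linarith [h1.1]
      by_cases hx : x ∈ closedBall p.2 (p.1 + 2 * p.1 * R)
      · rw [indicator_of_mem hx, cutK, norm_smul]
        exact mul_le_mul (hZ _ h1) (hM _) (norm_nonneg _) ((norm_nonneg _).trans (hZ _ h1))
      · rw [indicator_of_notMem hx, hR d (m - 1) q hq0 x, norm_zero]
        intro h3
        apply hx
        rw [mem_closedBall] at h3 ⊢
        have := dist_triangle x q.2 p.2
        have := mul_le_mul_of_nonneg_right h1.2 hR0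
        linarith)
    ((integrable_indicator_iff measurableSet_closedBall).2
      (integrableOn_const (measure_closedBall_lt_top.ne)))
    (Filter.Eventually.of_forall fun x q hq =>
      cutK_hasFDerivAt d m hA q (by linarith [(key q hq).1.1]) x)
  have e : cutG μ d (m - 1) (cutB m A) p = ∫ x, cutK d (m - 1) (cutB m A) p x ∂μ := by
    simp [cutG, hp]
  rw [e]
  refine h.congr_of_eventuallyEq ?_
  filter_upwards [(isOpen_lt continuous_const continuous_fst).mem_nhds hp] with q hq
  have : 0 < q.1 := hq
  simp [cutG, this]

lemma cutG_bound {F : Type} [NormedAddCommGroup F] [NormedSpace ℝ F]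
    {A : E × ℝ → F} (hA : ContDiff ℝ ∞ A) (hA' : HasCompactSupport A)
    (d : E → ℝ) (j : ℕ) (p0 : ℝ × E) (hp0 : p0.1 ≤ 0) :
    cutG μ d (j + 1 - Module.finrank ℝ E) A =O[𝓝 p0] fun p => ‖p - p0‖ ^ (j + 1) := by
  obtain ⟨M, R, hM0, hR0, hM, hR⟩ := cutK_bound hA hA'
  refine Asymptotics.IsBigO.of_bound (M * μ.real (closedBall 0 R)) (Filter.Eventually.of_forall ?_)
  intro p
  by_cases hp : 0 < p.1
  · have h1 : cutG μ d (j + 1 - Module.finrank ℝ E) A p =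
        ∫ x in closedBall p.2 (p.1 * R), cutK d (j + 1 - Module.finrank ℝ E) A p x ∂μ := by
      rw [setIntegral_eq_integral_of_forall_compl_eq_zero (hR _ _ p hp)]
      simp [cutG, hp]
    have h2 : μ.real (closedBall p.2 (p.1 * R)) =
        p.1 ^ Module.finrank ℝ E * μ.real (closedBall 0 R) := by
      rw [Measure.real, Measure.addHaar_closedBall_mul _ _ hp.le hR0, ENNReal.toReal_mul,
        ENNReal.toReal_ofReal (by positivity), Measure.real]
    rw [h1]
    refine (norm_setIntegral_le_of_norm_le_const measure_closedBall_lt_top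
      (C := p.1 ^ ((j : ℤ) + 1 - Module.finrank ℝ E) * M) ?_).trans ?_
    · intro x _
      rw [cutK, norm_smul, Real.norm_eq_abs, abs_of_pos (zpow_pos hp _)]
      exact mul_le_mul_of_nonneg_left (hM _) (zpow_pos hp _).le
    · have h3 : p.1 ^ ((j : ℤ) + 1 - Module.finrank ℝ E) * p.1 ^ Module.finrank ℝ E
          = p.1 ^ (j + 1) := by
        rw [← zpow_natCast, ← zpow_add₀ hp.ne', ← zpow_natCast]; congr 1; push_cast; ring
      have h4 : p.1 ≤ ‖p - p0‖ := by
        have := norm_fst_le (p - p0)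
        rw [Prod.fst_sub, Real.norm_eq_abs] at this
        linarith [le_abs_self (p.1 - p0.1)]
      rw [h2, norm_pow, norm_norm]
      calc _ = M * μ.real (closedBall 0 R) * p.1 ^ (j + 1) := by rw [← h3]; ring
        _ ≤ _ := by gcongr
  · simp only [cutG, hp, if_false, norm_zero]; positivity

lemma cutG_contDiff (j : ℕ) : ∀ {F : Type} [NormedAddCommGroup F] [NormedSpace ℝ F]
    {A : E × ℝ → F} (_ : ContDiff ℝ ∞ A) (_ : HasCompactSupport A)
    {d : E → ℝ} (_ : Continuous d),
    ContDiff ℝ j (cutG μ d (j + 1 - Module.finrank ℝ E) A) := by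
  induction j with
  | zero =>
    intro F _ _ A hA hA' d hd
    rw [Nat.cast_zero, contDiff_zero, continuous_iff_continuousAt]
    intro p
    by_cases hp : 0 < p.1
    · exact (cutG_hasFDerivAt μ hA hA' hd _ p hp).continuousAt
    · have h := cutG_bound μ hA hA' d 0 p (not_lt.1 hp)
      have h0 : cutG μ d ((0 : ℕ) + 1 - Module.finrank ℝ E) A p = 0 := by simp [cutG, hp]
      rw [ContinuousAt, h0]
      refine h.trans_tendsto ?_
      have : Continuous fun q : ℝ × E => ‖q - p‖ ^ (0 + 1) := by fun_prop
      simpa using this.tendsto p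
  | succ j ih =>
    intro F _ _ A hA hA' d hd
    rw [Nat.cast_add, Nat.cast_one, contDiff_succ_iff_hasFDerivAt]
    refine ⟨_, ih (cutB_contDiff ((j + 1 : ℕ) + 1 - Module.finrank ℝ E) hA) (cutB_supp _ hA') hd, ?_⟩
    intro p
    by_cases hp : 0 < p.1
    · have := cutG_hasFDerivAt μ hA hA' hd ((j + 1 : ℕ) + 1 - Module.finrank ℝ E) p hp
      have e : (((j + 1 : ℕ) : ℤ) + 1 - Module.finrank ℝ E - 1) = j + 1 - Module.finrank ℝ E := by
        push_cast; ring
      rw [e] at this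
      exact this
    · have h := Asymptotics.IsBigO.hasFDerivAt (𝕜 := ℝ)
        (cutG_bound μ hA hA' d (j + 1) p (not_lt.1 hp)) (by omega)
      refine h.congr_fderiv ?_
      simp [cutG, hp]

end Aux

lemma cut_main (n j : ℕ) (c : ℝ) (hc : 0 < c)
    (T : Set (EuclideanSpace ℝ (Fin n))) (hT : T.Nonempty) :
    ∃ ψ : ℝ × EuclideanSpace ℝ (Fin n) → ℝ,
      ContDiffOn ℝ (⊤ : ℕ∞) ψ
        (Set.Ioi (0 : ℝ) ×ˢ (Set.univ : Set (EuclideanSpace ℝ (Fin n)))) ∧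
      (∀ p : ℝ × EuclideanSpace ℝ (Fin n), 0 < p.1 → ψ p ∈ Set.Icc (0 : ℝ) 1) ∧
      (∀ t : ℝ, 0 < t → ∀ x ∈ T, ψ (t, x) = 1) ∧
      (∀ p : ℝ × EuclideanSpace ℝ (Fin n), 0 < p.1 → c * p.1 ≤ infDist p.2 T → ψ p = 0) ∧
      ContDiff ℝ (j : ℕ∞)
        (fun p : ℝ × EuclideanSpace ℝ (Fin n) =>
          if 0 < p.1 then p.1 ^ (j + 1) * ψ p else 0) := by
  let f : ContDiffBump (0 : EuclideanSpace ℝ (Fin n)) := ⟨c / 8, c / 4, by linarith, by linarith⟩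
  let h : ContDiffBump (0 : ℝ) := ⟨c / 4, c / 2, by linarith, by linarith⟩
  let φ := f.normed volume
  let d : EuclideanSpace ℝ (Fin n) → ℝ := fun x => infDist x T
  have hd : Continuous d := continuous_infDist_pt T
  let A : EuclideanSpace ℝ (Fin n) × ℝ → ℝ := fun w => φ w.1 * h w.2
  have hA : ContDiff ℝ ∞ A :=
    (f.contDiff_normed.comp contDiff_fst).mul (h.contDiff.comp contDiff_snd)
  have hA' : HasCompactSupport A := by
    refine HasCompactSupport.intro
      (f.hasCompactSupport_normed (μ := volume).isCompact.prod h.hasCompactSupport.isCompact) ?_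
    intro w hw
    rw [Set.mem_prod, not_and_or] at hw
    rcases hw with hw | hw
    · have : φ w.1 = 0 := image_eq_zero_of_notMem_tsupport hw
      simp [A, this]
    · have : h w.2 = 0 := image_eq_zero_of_notMem_tsupport hw
      simp [A, this]
  have hφ0 : ∀ z, 0 ≤ φ z := fun z => f.nonneg_normed z
  have hφ : ∀ z, φ z ≠ 0 → ‖z‖ < c / 4 := by
    intro z hz
    have : z ∈ Function.support (f.normed volume) := hz
    rw [f.support_normed_eq] at this
    simpa using this
  have hφi : ∀ t : ℝ, 0 < t → ∀ y, ∫ x, φ (t⁻¹ • (y - x)) = t ^ n := by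
    intro t ht y
    rw [integral_sub_left_eq_self (fun x => φ (t⁻¹ • x)) volume y,
      Measure.integral_comp_inv_smul_of_nonneg _ _ ht.le, f.integral_normed]
    simp
  have hφI : ∀ t : ℝ, 0 < t → ∀ y, Integrable (fun x => φ (t⁻¹ • (y - x))) := by
    intro t ht y
    by_contra hI
    have := hφi t ht y
    rw [integral_undef hI] at this
    exact (pow_pos ht n).ne this
  have hG : ∀ k : ℕ, ContDiff ℝ k (cutG volume d (k + 1 - n) A) := by
    intro k
    have := cutG_contDiff volume k hA hA' hd
    rwa [finrank_euclideanSpace_fin] at this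
  let ψ : ℝ × EuclideanSpace ℝ (Fin n) → ℝ := cutG volume d (-n) A
  have hψ : ∀ p : ℝ × EuclideanSpace ℝ (Fin n), 0 < p.1 →
      ψ p = (p.1 ^ n)⁻¹ * ∫ x, φ (p.1⁻¹ • (p.2 - x)) * h (p.1⁻¹ * d x) := by
    intro p hp
    simp only [ψ, cutG, hp, if_true, cutK, A, Prod.smul_fst, Prod.smul_snd, smul_eq_mul]
    rw [integral_const_mul, zpow_neg, zpow_natCast]
  have hGψ : ∀ k : ℕ, ∀ p : ℝ × EuclideanSpace ℝ (Fin n), 0 < p.1 →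
      cutG volume d (k + 1 - n) A p = p.1 ^ (k + 1) * ψ p := by
    intro k p hp
    simp only [ψ, cutG, hp, if_true, cutK, smul_eq_mul]
    rw [integral_const_mul, integral_const_mul, ← mul_assoc, ← zpow_natCast, ← zpow_add₀ hp.ne']
    congr 2
  refine ⟨ψ, ?_, ?_, ?_, ?_, ?_⟩
  · rw [contDiffOn_infty]
    intro k
    have h1 : ContDiffOn ℝ k (fun p : ℝ × EuclideanSpace ℝ (Fin n) =>
        (p.1 ^ (k + 1))⁻¹ * cutG volume d (k + 1 - n) A p) (Ioi 0 ×ˢ univ) := by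
      refine ContDiffOn.mul (ContDiffOn.inv (by fun_prop) ?_) (hG k).contDiffOn
      rintro p ⟨hp, -⟩
      exact (pow_pos hp _).ne'
    refine h1.congr ?_
    rintro p ⟨hp, -⟩
    have hp' : 0 < p.1 := hp
    rw [hGψ k p hp', inv_mul_cancel_left₀ (pow_pos hp' _).ne']
  · intro p hp
    rw [hψ p hp]
    have h0 : 0 ≤ ∫ x, φ (p.1⁻¹ • (p.2 - x)) * h (p.1⁻¹ * d x) :=
      integral_nonneg fun x => mul_nonneg (hφ0 _) h.nonneg
    have h1 : ∫ x, φ (p.1⁻¹ • (p.2 - x)) * h (p.1⁻¹ * d x) ≤ p.1 ^ n := by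
      rw [← hφi p.1 hp p.2]
      refine integral_mono_of_nonneg (Filter.Eventually.of_forall fun x => ?_) (hφI p.1 hp p.2)
        (Filter.Eventually.of_forall fun x => ?_)
      · exact mul_nonneg (hφ0 _) h.nonneg
      · exact mul_le_of_le_one_right (hφ0 _) h.le_one
    have := pow_pos hp n
    exact ⟨by positivity, by rwa [inv_mul_le_iff₀ this, mul_one]⟩
  · intro t ht y hy
    rw [hψ (t, y) ht]
    have : ∀ x, φ (t⁻¹ • (y - x)) * h (t⁻¹ * d x) = φ (t⁻¹ • (y - x)) := by
      intro x
      by_cases hx : φ (t⁻¹ • (y - x)) = 0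
      · simp [hx]
      · have h1 := hφ _ hx
        rw [norm_smul, norm_inv, Real.norm_eq_abs, abs_of_pos ht, ← dist_eq_norm, dist_comm] at h1
        have h2 : d x ≤ dist x y := infDist_le_dist_of_mem hy
        have h3 : t⁻¹ * d x ≤ t⁻¹ * dist x y := by gcongr
        have h4 : 0 ≤ t⁻¹ * d x := mul_nonneg (by positivity) infDist_nonneg
        rw [h.one_of_mem_closedBall, mul_one]
        rw [mem_closedBall_zero_iff, Real.norm_eq_abs, abs_of_nonneg h4]
        exact h3.trans h1.le
    simp only [this]
    rw [hφi t ht y, inv_mul_cancel₀ (pow_pos ht n).ne']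
  · rintro ⟨t, y⟩ ht hy
    simp only at ht hy
    rw [hψ (t, y) ht]
    have : ∀ x, φ (t⁻¹ • (y - x)) * h (t⁻¹ * d x) = 0 := by
      intro x
      by_cases hx : φ (t⁻¹ • (y - x)) = 0
      · simp [hx]
      · have h1 := hφ _ hx
        rw [norm_smul, norm_inv, Real.norm_eq_abs, abs_of_pos ht, ← dist_eq_norm,
          inv_mul_lt_iff₀ ht] at h1
        have h2 : infDist y T ≤ d x + dist y x := infDist_le_infDist_add_dist
        have h3 : c / 2 ≤ t⁻¹ * d x := by
          rw [le_inv_mul_iff₀ ht]; nlinarith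
        rw [h.zero_of_le_dist, mul_zero]
        rw [dist_zero_right, Real.norm_eq_abs]
        exact h3.trans (le_abs_self _)
    simp [this]
  · suffices hh : (fun p : ℝ × EuclideanSpace ℝ (Fin n) =>
          if 0 < p.1 then p.1 ^ (j + 1) * ψ p else 0) = cutG volume d (j + 1 - n) A by
      rw [hh]; exact hG j
    funext p
    by_cases hp : 0 < p.1
    · rw [if_pos hp, hGψ j p hp]
    · rw [if_neg hp, cutG, if_neg hp]

/-- Whitney-type cutoff lemma: given a compact `T ⊆ ℝⁿ` and a set `S` closed in
`(0,∞) × ℝⁿ` whose slices `S_t` stay at distance `≥ c·t` from `T`, there is a smooth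
`ψ : (0,∞) × ℝⁿ → [0,1]` with `ψ ≡ 1` on `(0,∞) × T`, `ψ ≡ 0` on `S`, such that
`t^{j+1} ψ(t,y)` (extended by `0` for `t ≤ 0`) is `Cʲ` on all of `ℝ × ℝⁿ`. -/
theorem stmt_3 (n j : ℕ) (c : ℝ) (hc : 0 < c)
    (T : Set (EuclideanSpace ℝ (Fin n))) (hT : IsCompact T)
    (S : Set (ℝ × EuclideanSpace ℝ (Fin n)))
    (hSsub : S ⊆ Set.Ioi (0 : ℝ) ×ˢ (Set.univ : Set (EuclideanSpace ℝ (Fin n))))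
    (hSclosed : ∃ S' : Set (ℝ × EuclideanSpace ℝ (Fin n)), IsClosed S' ∧
      S = S' ∩ Set.Ioi (0 : ℝ) ×ˢ (Set.univ : Set (EuclideanSpace ℝ (Fin n))))
    (hdist : ∀ t : ℝ, 0 < t → ∀ x ∈ T, ∀ y : EuclideanSpace ℝ (Fin n),
      (t, y) ∈ S → c * t ≤ dist x y) :
    ∃ ψ : ℝ × EuclideanSpace ℝ (Fin n) → ℝ,
      ContDiffOn ℝ (⊤ : ℕ∞) ψ
        (Set.Ioi (0 : ℝ) ×ˢ (Set.univ : Set (EuclideanSpace ℝ (Fin n)))) ∧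
      (∀ p : ℝ × EuclideanSpace ℝ (Fin n), 0 < p.1 → ψ p ∈ Set.Icc (0 : ℝ) 1) ∧
      (∀ t : ℝ, 0 < t → ∀ x ∈ T, ψ (t, x) = 1) ∧
      (∀ p ∈ S, ψ p = 0) ∧
      ContDiff ℝ (j : ℕ∞)
        (fun p : ℝ × EuclideanSpace ℝ (Fin n) =>
          if 0 < p.1 then p.1 ^ (j + 1) * ψ p else 0) := by
  rcases T.eq_empty_or_nonempty with hE | hN
  · subst hE
    refine ⟨fun _ => 0, contDiffOn_const, by simp, by simp, by simp, ?_⟩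
    simpa using contDiff_const
  · obtain ⟨ψ, h1, h2, h3, h4, h5⟩ := cut_main n j c hc T hN
    refine ⟨ψ, h1, h2, h3, ?_, h5⟩
    rintro ⟨t, y⟩ hp
    have ht : 0 < t := (hSsub hp).1
    refine h4 (t, y) ht ?_
    refine (Metric.le_infDist hN).2 fun x hx => ?_
    rw [dist_comm]
    exact hdist t ht x hx y hp
end

section
/- Let r ≥ 0 be an integer, let Λ be a group, let C be a free abelian group of rank r (C ≅ ℤ^r), and let Γ = C × Λ be their direct product (so that C is central in Γ and the extension 1 → C → Γ → Λ → 1 splits). Assume that the rational group cohomology spaces H^p(Λ, ℚ) and H^p(Γ, ℚ) (with trivial coefficients) are finite-dimensional for all p and vanish for all p larger than some bound. Then χ(Λ, ℚ) = χ_r(Γ, ℚ), i.e. ∑_p (−1)^p dim_ℚ H^p(Λ, ℚ) = ∑_p (−1)^{p+r} binom(p, r) dim_ℚ H^p(Γ, ℚ). -/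
open CategoryTheory

noncomputable section

/-- Functions on `ℤ`, with the translation action of `ℤ × G`. -/
def zRho (G : Type) [Group G] : Representation ℚ (Multiplicative ℤ × G) (ℤ → ℚ) where
  toFun z := LinearMap.funLeft ℚ ℚ (fun n : ℤ => n + Multiplicative.toAdd z.1)
  map_one' := by ext; simp [LinearMap.funLeft]
  map_mul' a b := by
    ext x n
    simp [LinearMap.funLeft, add_assoc]

lemma zRho_apply (G : Type) [Group G] (z : Multiplicative ℤ × G) (f : ℤ → ℚ) (n : ℤ) :
    zRho G z f n = f (n + Multiplicative.toAdd z.1) := rfl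

abbrev zF (G : Type) [Group G] : Rep ℚ (Multiplicative ℤ × G) := Rep.of (zRho G)

abbrev zConst (G : Type) [Group G] : Rep.trivial ℚ (Multiplicative ℤ × G) ℚ ⟶ zF G :=
  Rep.ofHom
    { toFun := fun c _ => c
      map_add' := fun _ _ => rfl
      map_smul' := fun _ _ => rfl
      isIntertwining' := fun _ => rfl }

abbrev zDiff (G : Type) [Group G] : zF G ⟶ zF G :=
  Rep.ofHom
    { toFun := fun f n => f (n + 1) - f n
      map_add' := fun f g => by ext n; simp; ring
      map_smul' := fun c f => by ext n; simp; ring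
      isIntertwining' := fun z => by
        ext f n
        simp [zRho_apply]
        congr 1; ring_nf }

lemma zDiff_surj (y : ℤ → ℚ) : ∃ x : ℤ → ℚ, ∀ n, x (n + 1) - x n = y n := by
  let x : ℤ → ℚ := fun n => ∑ i ∈ Finset.range n.toNat, y i -
    ∑ i ∈ Finset.range (-n).toNat, y (-(i : ℤ) - 1)
  refine ⟨x, fun n => ?_⟩
  rcases le_or_gt 0 n with h | h
  · obtain ⟨m, rfl⟩ := Int.eq_ofNat_of_zero_le h
    have h1 : (-((m : ℤ) + 1)).toNat = 0 := by omega
    have h2 : (-(m : ℤ)).toNat = 0 := by omega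
    have h3 : ((m : ℤ) + 1).toNat = m + 1 := by omega
    have h4 : (m : ℤ).toNat = m := by omega
    simp only [x, h1, h2, h3, h4, Finset.sum_range_succ]
    simp
  · obtain ⟨m, hm⟩ := Int.eq_ofNat_of_zero_le (show 0 ≤ -n - 1 by omega)
    obtain rfl : n = -(m : ℤ) - 1 := by omega
    have h1 : (-(m : ℤ) - 1 + 1).toNat = 0 := by omega
    have h2 : (-(m : ℤ) - 1).toNat = 0 := by omega
    have h3 : (-(-(m : ℤ) - 1 + 1)).toNat = m := by omega
    have h4 : (-(-(m : ℤ) - 1)).toNat = m + 1 := by omega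
    simp only [x, h1, h2, h3, h4, Finset.sum_range_succ]
    simp

abbrev zSeq (G : Type) [Group G] : ShortComplex (Rep ℚ (Multiplicative ℤ × G)) where
  X₁ := Rep.trivial ℚ (Multiplicative ℤ × G) ℚ
  X₂ := zF G
  X₃ := zF G
  f := zConst G
  g := zDiff G
  zero := by
    ext n
    exact sub_self (1 : ℚ)

lemma zSeq_exact (G : Type) [Group G] : (zSeq G).ShortExact where
  exact := by
    rw [← ShortComplex.exact_map_iff_of_faithful _
      (forget₂ (Rep ℚ (Multiplicative ℤ × G)) (ModuleCat ℚ)), ShortComplex.moduleCat_exact_iff]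
    intro (x : ℤ → ℚ) hx
    have hx' : ∀ n, x (n + 1) = x n := fun n => sub_eq_zero.1 (congrFun hx n)
    refine ⟨x 0, funext fun n => ?_⟩
    change x 0 = x n
    induction n using Int.induction_on with
    | zero => rfl
    | succ i ih => rw [hx', ih]
    | pred i ih => rw [ih, ← hx' (-(i : ℤ) - 1)]; congr 1; ring
  mono_f := by
    rw [Rep.mono_iff_injective]
    intro a b h
    exact congrFun h 0
  epi_g := by
    rw [Rep.epi_iff_surjective]
    intro y
    obtain ⟨x, hx⟩ := zDiff_surj y
    exact ⟨x, funext hx⟩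

abbrev zSub (G : Type) [Group G] : Subgroup (Multiplicative ℤ × G) := (⊥ : Subgroup _).prod ⊤

def zSubEquiv (G : Type) [Group G] : zSub G ≃* G where
  toFun s := s.1.2
  invFun g := ⟨(1, g), by simp [Subgroup.mem_prod]⟩
  left_inv s := by
    obtain ⟨⟨a, b⟩, h⟩ := s
    simp [Subgroup.mem_prod] at h
    simp [h]
  right_inv g := rfl
  map_mul' _ _ := rfl

def zCoindEquiv (G : Type) [Group G] :
    Representation.coindV (zSub G).subtype (Rep.trivial ℚ (zSub G) ℚ).ρ ≃ₗ[ℚ] (ℤ → ℚ) where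
  toFun f n := f.1 (Multiplicative.ofAdd n, 1)
  invFun φ := ⟨fun z => φ (Multiplicative.toAdd z.1), by
    rintro ⟨⟨a, b⟩, h⟩ z
    simp [Subgroup.mem_prod] at h
    simp [h]⟩
  left_inv f := by
    ext ⟨a, b⟩
    have := f.2 ⟨(1, b), by simp [Subgroup.mem_prod]⟩ (a, 1)
    simp at this
    exact this.symm
  right_inv φ := rfl
  map_add' _ _ := rfl
  map_smul' _ _ := rfl

def zIso (G : Type) [Group G] (n : ℕ) :
    groupCohomology (zF G) n ≅ groupCohomology (Rep.trivial ℚ G ℚ) n :=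
  (groupCohomology.mapIso (B := Rep.coind (zSub G).subtype (Rep.trivial ℚ (zSub G) ℚ))
      (A := zF G) (MulEquiv.refl _) (zCoindEquiv G) (by
        rintro ⟨a, b⟩
        ext f n
        have := f.2 ⟨(1, b), by simp [Subgroup.mem_prod]⟩ (Multiplicative.ofAdd n * a, 1)
        simp at this
        change f.1 ((Multiplicative.ofAdd n, 1) * (a, b)) = f.1 (Multiplicative.ofAdd n * a, 1)
        simpa using this) n).symm ≪≫
  groupCohomology.coindIso (Rep.trivial ℚ (zSub G) ℚ) n ≪≫
  groupCohomology.mapIso (B := Rep.trivial ℚ (zSub G) ℚ) (A := Rep.trivial ℚ G ℚ)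
    (zSubEquiv G) (LinearEquiv.refl ℚ ℚ) (fun _ => rfl) n

/-- Inflation. -/
abbrev zInfl (G : Type) [Group G] (n : ℕ) :
    groupCohomology (Rep.trivial ℚ G ℚ) n ⟶
      groupCohomology (Rep.trivial ℚ (Multiplicative ℤ × G) ℚ) n :=
  groupCohomology.map (MonoidHom.snd (Multiplicative ℤ) G)
    (A := Rep.trivial ℚ G ℚ) (B := Rep.trivial ℚ (Multiplicative ℤ × G) ℚ)
    (Rep.ofHom ⟨LinearMap.id, fun _ => rfl⟩) n

abbrev zEv (G : Type) [Group G] (n : ℕ) :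
    groupCohomology (zF G) n ⟶ groupCohomology (Rep.trivial ℚ G ℚ) n :=
  groupCohomology.map (MonoidHom.inr (Multiplicative ℤ) G)
    (A := zF G) (B := Rep.trivial ℚ G ℚ)
    (Rep.ofHom ⟨LinearMap.proj (0 : ℤ), fun g => by ext; simp [zRho_apply]⟩) n

abbrev zMapC (G : Type) [Group G] (n : ℕ) :
    groupCohomology (Rep.trivial ℚ (Multiplicative ℤ × G) ℚ) n ⟶ groupCohomology (zF G) n :=
  groupCohomology.map (MonoidHom.id _) (zConst G) n

abbrev zMapD (G : Type) [Group G] (n : ℕ) :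
    groupCohomology (zF G) n ⟶ groupCohomology (zF G) n :=
  groupCohomology.map (MonoidHom.id _) (zDiff G) n

lemma zSplit (G : Type) [Group G] (n : ℕ) : zInfl G n ≫ zMapC G n ≫ zEv G n = 𝟙 _ := by
  rw [← groupCohomology.map_comp, ← groupCohomology.map_comp, ← groupCohomology.map_id]
  exact groupCohomology.map_congr rfl rfl n

lemma zMapC_surj (G : Type) [Group G] (n : ℕ)
    [FiniteDimensional ℚ (groupCohomology (Rep.trivial ℚ G ℚ) n)] :
    Function.Surjective (zMapC G n).hom := by
  have hfr := (zIso G n).toLinearEquiv.finrank_eq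
  have : FiniteDimensional ℚ (groupCohomology (zF G) n) :=
    Module.Finite.equiv (zIso G n).toLinearEquiv.symm
  have hinj : Function.Injective ((zMapC G n).hom ∘ₗ (zInfl G n).hom) := by
    apply Function.LeftInverse.injective (g := (zEv G n).hom)
    intro x
    have := zSplit G n
    exact congrArg (fun f => f.hom x) this
  have hs := (LinearMap.injective_iff_surjective_of_finrank_eq_finrank hfr.symm).1 hinj
  exact Function.Surjective.of_comp hs

lemma zMapD_zero (G : Type) [Group G] (n : ℕ)
    [FiniteDimensional ℚ (groupCohomology (Rep.trivial ℚ G ℚ) n)] (x) :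
    (zMapD G n).hom x = 0 := by
  obtain ⟨y, rfl⟩ := zMapC_surj G n x
  have := (groupCohomology.mapShortComplex₂ (zSeq G) n).zero
  exact congrArg (fun f => f.hom y) this

lemma zFinite_and_finrank (G : Type) [Group G] (n : ℕ)
    [FiniteDimensional ℚ (groupCohomology (Rep.trivial ℚ G ℚ) n)]
    [FiniteDimensional ℚ (groupCohomology (Rep.trivial ℚ G ℚ) (n + 1))] :
    FiniteDimensional ℚ (groupCohomology (Rep.trivial ℚ (Multiplicative ℤ × G) ℚ) (n + 1)) ∧
    Module.finrank ℚ (groupCohomology (Rep.trivial ℚ (Multiplicative ℤ × G) ℚ) (n + 1)) =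
      Module.finrank ℚ (groupCohomology (Rep.trivial ℚ G ℚ) (n + 1)) +
      Module.finrank ℚ (groupCohomology (Rep.trivial ℚ G ℚ) n) := by
  have i1 : FiniteDimensional ℚ (groupCohomology (zF G) n) :=
    Module.Finite.equiv (zIso G n).toLinearEquiv.symm
  have i2 : FiniteDimensional ℚ (groupCohomology (zF G) (n + 1)) :=
    Module.Finite.equiv (zIso G (n + 1)).toLinearEquiv.symm
  let d : groupCohomology (zF G) n →ₗ[ℚ]
      groupCohomology (Rep.trivial ℚ (Multiplicative ℤ × G) ℚ) (n + 1) :=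
    (groupCohomology.δ (zSeq_exact G) n (n + 1) rfl).hom
  let c : groupCohomology (Rep.trivial ℚ (Multiplicative ℤ × G) ℚ) (n + 1) →ₗ[ℚ]
      groupCohomology (zF G) (n + 1) := (zMapC G (n + 1)).hom
  have hc : Function.Surjective c := zMapC_surj G (n + 1)
  have hd : Function.Injective d := by
    rw [injective_iff_map_eq_zero]
    intro x hx
    have h3 := groupCohomology.mapShortComplex₃_exact (zSeq_exact G) (i := n) (j := n + 1) rfl
    rw [ShortComplex.moduleCat_exact_iff] at h3
    obtain ⟨y, hy⟩ := h3 x hx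
    rw [← hy]
    exact zMapD_zero G n y
  have hex : LinearMap.range d = LinearMap.ker c := by
    have h1 := groupCohomology.mapShortComplex₁_exact (zSeq_exact G) (i := n) (j := n + 1) rfl
    exact h1.moduleCat_range_eq_ker
  have hfin : FiniteDimensional ℚ
      (groupCohomology (Rep.trivial ℚ (Multiplicative ℤ × G) ℚ) (n + 1)) := by
    have : Module.Finite ℚ (LinearMap.ker c) := by rw [← hex]; infer_instance
    have : Module.Finite ℚ (LinearMap.range c) := inferInstance
    have : Module.Finite ℚ (_ ⧸ LinearMap.ker c) :=
      Module.Finite.equiv c.quotKerEquivRange.symm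
    exact Module.Finite.of_submodule_quotient (LinearMap.ker c)
  refine ⟨hfin, ?_⟩
  have h := LinearMap.finrank_range_add_finrank_ker c
  rw [← hex, LinearMap.finrank_range_of_inj hd, LinearMap.range_eq_top.2 hc, finrank_top,
    (zIso G n).toLinearEquiv.finrank_eq, (zIso G (n + 1)).toLinearEquiv.finrank_eq] at h
  exact h.symm

def hZero (G : Type) [Group G] :
    groupCohomology (Rep.trivial ℚ G ℚ) 0 ≃ₗ[ℚ] ℚ :=
  (groupCohomology.H0IsoOfIsTrivial (Rep.trivial ℚ G ℚ)).toLinearEquiv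

abbrev hdim (G : Type) [Group G] (p : ℕ) : ℕ :=
  Module.finrank ℚ (groupCohomology (Rep.trivial ℚ G ℚ) p)

/-- finite-dimensional cohomology with zero dimension in large degrees -/
def Good (G : Type) [Group G] : Prop :=
  (∀ p, FiniteDimensional ℚ (groupCohomology (Rep.trivial ℚ G ℚ) p)) ∧
    ∃ N, ∀ p, N < p → hdim G p = 0

lemma hdim_congr {G H : Type} [Group G] [Group H] (e : G ≃* H) (n : ℕ) :
    Nonempty (groupCohomology (Rep.trivial ℚ G ℚ) n ≃ₗ[ℚ]
      groupCohomology (Rep.trivial ℚ H ℚ) n) :=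
  ⟨(groupCohomology.mapIso (B := Rep.trivial ℚ G ℚ) (A := Rep.trivial ℚ H ℚ)
    e (LinearEquiv.refl ℚ ℚ) (fun _ => rfl) n).toLinearEquiv⟩

def eul (a : ℕ → ℕ) (r : ℕ) : ℤ := ∑' p : ℕ, ((-1 : ℤ) ^ (p + r) * (p.choose r : ℤ) * (a p : ℤ))

lemma eul_step (a b : ℕ → ℕ) (r : ℕ) (N : ℕ) (ha : ∀ p, N < p → a p = 0)
    (hb : ∀ p, b (p + 1) = a (p + 1) + a p) : eul b (r + 1) = eul a r := by
  have sm : ∀ (c : ℕ → ℤ), (∀ p, N < p → c p = 0) → Summable c := fun c hc =>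
    summable_of_ne_finset_zero (s := Finset.range (N + 1)) (fun p hp => hc p (by
      simp at hp; omega))
  have sm' : ∀ (c : ℕ → ℤ), (∀ p, N + 1 < p → c p = 0) → Summable c := fun c hc =>
    summable_of_ne_finset_zero (s := Finset.range (N + 2)) (fun p hp => hc p (by
      simp at hp; omega))
  unfold eul
  rw [(sm' _ (fun p hp => by
    obtain ⟨q, rfl⟩ : ∃ q, p = q + 1 := ⟨p - 1, by omega⟩
    rw [hb, ha _ (by omega), ha _ (by omega)]; simp)).tsum_eq_zero_add]
  have s1 : Summable fun p : ℕ => (-1 : ℤ) ^ (p + (r + 1)) * (p.choose (r + 1) : ℤ) * (a p : ℤ) :=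
    sm _ (fun p hp => by simp [ha p hp])
  have s1' : Summable fun p : ℕ =>
      (-1 : ℤ) ^ (p + 1 + (r + 1)) * ((p + 1).choose (r + 1) : ℤ) * (a (p + 1) : ℤ) :=
    sm _ (fun p hp => by simp [ha (p + 1) (by omega)])
  have s2 : Summable fun p : ℕ =>
      (-1 : ℤ) ^ (p + 1 + (r + 1)) * ((p + 1).choose (r + 1) : ℤ) * (a p : ℤ) :=
    sm _ (fun p hp => by simp [ha p hp])
  have e1 := s1.tsum_eq_zero_add
  simp only [hb, Nat.cast_add, mul_add]
  simp only [Nat.choose_zero_succ, Nat.cast_zero, mul_zero, zero_mul, zero_add] at e1 ⊢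
  rw [s1'.tsum_add s2, ← e1, ← s1.tsum_add s2]
  refine tsum_congr fun p => ?_
  rw [Nat.choose_succ_succ]
  push_cast
  ring

lemma good_step (G : Type) [Group G] (h : Good G) (r : ℕ) :
    Good (Multiplicative ℤ × G) ∧
      eul (hdim (Multiplicative ℤ × G)) (r + 1) = eul (hdim G) r := by
  obtain ⟨hf, N, hN⟩ := h
  have hb : ∀ p, hdim (Multiplicative ℤ × G) (p + 1) = hdim G (p + 1) + hdim G p := fun p =>
    (zFinite_and_finrank G p).2
  refine ⟨⟨?_, N + 1, ?_⟩, eul_step _ _ r N hN hb⟩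
  · intro p
    cases p with
    | zero => exact Module.Finite.equiv (hZero _).symm
    | succ p => exact (zFinite_and_finrank G p).1
  · intro p hp
    obtain ⟨q, rfl⟩ : ∃ q, p = q + 1 := ⟨p - 1, by omega⟩
    rw [hb, hN _ (by omega), hN _ (by omega)]

lemma good_congr {G H : Type} [Group G] [Group H] (e : G ≃* H) (h : Good G) :
    Good H ∧ hdim H = hdim G := by
  obtain ⟨hf, N, hN⟩ := h
  have hd : hdim H = hdim G := funext fun n => ((hdim_congr e n).some.finrank_eq).symm
  refine ⟨⟨fun p => ?_, N, fun p hp => by rw [hd, hN p hp]⟩, hd⟩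
  have := hf p
  exact Module.Finite.equiv (hdim_congr e p).some

def consE (r : ℕ) (Λ : Type) [Group Λ] :
    Multiplicative ℤ × (Multiplicative (Fin r → ℤ) × Λ) ≃*
      Multiplicative (Fin (r + 1) → ℤ) × Λ where
  toFun x := (Multiplicative.ofAdd (Fin.cons (Multiplicative.toAdd x.1)
    (Multiplicative.toAdd x.2.1)), x.2.2)
  invFun y := (Multiplicative.ofAdd (Multiplicative.toAdd y.1 0),
    (Multiplicative.ofAdd (fun i => Multiplicative.toAdd y.1 (Fin.succ i)), y.2))
  left_inv x := rfl
  right_inv y := by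
    refine Prod.ext ?_ rfl
    apply Multiplicative.toAdd.injective
    funext i
    refine Fin.cases rfl (fun j => rfl) i
  map_mul' x y := by
    refine Prod.ext ?_ rfl
    apply Multiplicative.toAdd.injective
    funext i
    refine Fin.cases rfl (fun j => rfl) i

def nilE (Λ : Type) [Group Λ] : Λ ≃* Multiplicative (Fin 0 → ℤ) × Λ where
  toFun x := (1, x)
  invFun y := y.2
  left_inv x := rfl
  right_inv y := Prod.ext (Subsingleton.elim (α := Fin 0 → ℤ) _ _) rfl
  map_mul' x y := rfl

lemma main_ind (Λ : Type) [Group Λ] (h : Good Λ) (r : ℕ) :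
    Good (Multiplicative (Fin r → ℤ) × Λ) ∧
      eul (hdim (Multiplicative (Fin r → ℤ) × Λ)) r = eul (hdim Λ) 0 := by
  induction r with
  | zero =>
    obtain ⟨h1, h2⟩ := good_congr (nilE Λ) h
    exact ⟨h1, by rw [h2]⟩
  | succ r ih =>
    obtain ⟨h1, h2⟩ := good_step _ ih.1 r
    obtain ⟨h3, h4⟩ := good_congr (consE r Λ) h1
    exact ⟨h3, by rw [h4, h2, ih.2]⟩

end

/-- For a direct product `Γ = C × Λ` with `C ≅ ℤ^r` central, assuming the rational
group cohomology of `Λ` and of `Γ` is finite-dimensional and vanishes in large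
degrees, the Euler characteristic of `Λ` equals the `r`-th higher Euler
characteristic of `Γ`:
`∑_p (−1)^p dim H^p(Λ,ℚ) = ∑_p (−1)^{p+r} C(p,r) dim H^p(Γ,ℚ)`. -/
theorem stmt_8 (r : ℕ) (Λ : Type) [Group Λ]
    (C : Type) [CommGroup C] (e : C ≃* Multiplicative (Fin r → ℤ))
    (hfinΛ : ∀ p : ℕ, FiniteDimensional ℚ (groupCohomology (Rep.trivial ℚ Λ ℚ) p))
    (hfinΓ : ∀ p : ℕ, FiniteDimensional ℚ (groupCohomology (Rep.trivial ℚ (C × Λ) ℚ) p))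
    (hvanΛ : ∃ N : ℕ, ∀ p : ℕ, N < p →
      Subsingleton (groupCohomology (Rep.trivial ℚ Λ ℚ) p))
    (hvanΓ : ∃ N : ℕ, ∀ p : ℕ, N < p →
      Subsingleton (groupCohomology (Rep.trivial ℚ (C × Λ) ℚ) p)) :
    ∑' p : ℕ, ((-1 : ℤ) ^ p *
        (Module.finrank ℚ (groupCohomology (Rep.trivial ℚ Λ ℚ) p) : ℤ)) =
    ∑' p : ℕ, ((-1 : ℤ) ^ (p + r) * (p.choose r : ℤ) *
        (Module.finrank ℚ (groupCohomology (Rep.trivial ℚ (C × Λ) ℚ) p) : ℤ)) := by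
  obtain ⟨N, hN⟩ := hvanΛ
  have hg : Good Λ := ⟨hfinΛ, N, fun p hp => by
    have := hN p hp
    exact Module.finrank_zero_of_subsingleton⟩
  obtain ⟨h1, h2⟩ := main_ind Λ hg r
  obtain ⟨-, h4⟩ := good_congr (MulEquiv.prodCongr e.symm (MulEquiv.refl Λ)) h1
  have h5 : eul (hdim (C × Λ)) r = eul (hdim Λ) 0 := by rw [h4, h2]
  simpa [eul] using h5.symm
end
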